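/- Let a ∈ S, x ∈ C̄_a, and let η : Γ → ℤ/2ℤ be a finitely supported configuration. Then ℓ((𝟘,a)(η,x)) − ℓ((η,x)) = −1 if η_a is not identically zero, and = 1 if η_a is identically zero. -/

import Mathlib

open MeasureTheory ProbabilityTheory Filter Topology

namespace LamplighterTree

/-- `Γ`: the free product of `q` copies of `ℤ/2ℤ`. -/
abbrev Gamma (q : ℕ) : Type := Monoid.CoprodI (fun _ : Fin q => Multiplicative (ZMod 2))

/-- The generator `a_i` of `Γ`. -/
def gen (q : ℕ) (i : Fin q) : Gamma q :=
  Monoid.CoprodI.of (i := i) (Multiplicative.ofAdd (1 : ZMod 2))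

/-- Word length `|x|` of `x ∈ Γ` with respect to `S = {a_1, …, a_q}`, i.e. the graph
distance from `x` to the identity `o` in the homogeneous tree `T_q`. -/
noncomputable def wlen {q : ℕ} (x : Gamma q) : ℕ :=
  sInf {n | ∃ w : List (Fin q), w.length = n ∧ (w.map (gen q)).prod = x}

/-- `w` is a prefix of `w'`, i.e. `w` lies on the geodesic from `o` to `w'` in `T_q`. -/
def IsPrefix {q : ℕ} (w w' : Gamma q) : Prop :=
  wlen w + wlen (w⁻¹ * w') = wlen w'

/-- The cone `C_w` rooted at `w`. -/
def cone {q : ℕ} (w : Gamma q) : Set (Gamma q) := {w' | IsPrefix w w'}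

/-- Finitely supported lamp configurations `Γ → ℤ/2ℤ`. -/
abbrev Config (q : ℕ) : Type := Gamma q →₀ ZMod 2

/-- The lamplighter group `L_q` as the set of pairs (configuration, position). -/
abbrev L (q : ℕ) : Type := Config q × Gamma q

/-- The translated configuration `xη`, `(xη)(w) = η(x⁻¹ w)`. -/
noncomputable def translate {q : ℕ} (x : Gamma q) (η : Config q) : Config q :=
  Finsupp.mapDomain (fun w => x * w) η

/-- The wreath-product multiplication `(η₁,x)(η₂,y) = (η₁ ⊕ xη₂, xy)`. -/
noncomputable def lmul {q : ℕ} (z₁ z₂ : L q) : L q :=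
  (z₁.1 + translate z₁.2 z₂.1, z₁.2 * z₂.2)

/-- The identity `(𝟘, o)` of `L_q`. -/
def lone (q : ℕ) : L q := (0, 1)

/-- The generator `(𝟙_o, o)` of `L_q`. -/
noncomputable def lampSwitch (q : ℕ) : L q := (Finsupp.single 1 1, 1)

/-- The generator `(𝟘, a_i)` of `L_q`. -/
def move (q : ℕ) (i : Fin q) : L q := (0, gen q i)

/-- The generating set `S_{L_q}`. -/
noncomputable def lampGen (q : ℕ) : Set (L q) := {lampSwitch q} ∪ {z | ∃ i, z = move q i}

/-- Word length `ℓ(z)` of `z ∈ L_q` with respect to `S_{L_q}`. -/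
noncomputable def llen {q : ℕ} (z : L q) : ℕ :=
  sInf {n | ∃ w : List (L q), w.length = n ∧ (∀ g ∈ w, g ∈ lampGen q) ∧
    w.foldr lmul (lone q) = z}

instance {q : ℕ} : MeasurableSpace (Gamma q) := ⊤
instance {q : ℕ} : MeasurableSpace (Config q) := ⊤

/-- The lamplighter random walk `Z_n` built from the increments `i_k = inc k`, `k ≥ 1`. -/
noncomputable def Z {q : ℕ} {Ω : Type*} (inc : ℕ → Ω → L q) : ℕ → Ω → L q
  | 0 => fun _ => lone q
  | n + 1 => fun ω => lmul (Z inc n ω) (inc (n + 1) ω)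

end LamplighterTree

namespace LamplighterTree

/-!
A word for `(η, x)` describes a walk on the tree `T_q` from `o` to `x` along which every lamp of `η`
gets switched, so `ℓ((η, x))` is the size of the support of `η` plus the length of a shortest walk
from `o` to `x` visiting this support. Left multiplication by `(𝟘, a)` translates everything by `a`,
which amounts to letting the walk start at `a` instead of `o`.

The edge joining `o` and `a` is the only one between the cone `C_a` and its complement. A walk from
`a` to `x ∉ C_a` has to cross it; if no lamp of `η` lies in `C_a`, its part up to the first crossing
is superfluous, and starting at `o` saves one step. If some lamp of `η` lies in `C_a`, a walk from
`o` has to cross the edge both ways, and reordering it saves one step when starting at `a`.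
-/

section Tours

open SimpleGraph

variable {V W : Type*} {G : SimpleGraph V} {H : SimpleGraph W} {A B C : Set V} {a b u v w x : V}

/-- The least length of a walk in `G` from `u` to `v` that visits every vertex of `A`, i.e. the
optimal value of the travelling salesman problem for `A` with prescribed end points. The infimum is
taken in `ℕ`, so the value is `0` if there is no such walk. -/
noncomputable def tourLength (G : SimpleGraph V) (A : Set V) (u v : V) : ℕ :=
  sInf {n | ∃ p : G.Walk u v, (∀ w ∈ A, w ∈ p.support) ∧ p.length = n}

theorem tourLength_le_length (p : G.Walk u v) (hp : ∀ w ∈ A, w ∈ p.support) :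
    tourLength G A u v ≤ p.length :=
  Nat.sInf_le ⟨p, hp, rfl⟩

theorem exists_walk_visiting_of_finite (hG : G.Preconnected) (hA : A.Finite) (u v : V) :
    ∃ p : G.Walk u v, ∀ w ∈ A, w ∈ p.support := by
  induction A, hA using Set.Finite.induction_on generalizing u with
  | empty => exact ⟨(hG u v).some, by simp⟩
  | @insert y A _ _ ih =>
    obtain ⟨p, hp⟩ := ih y
    refine ⟨(hG u y).some.append p, fun w hw => ?_⟩
    rw [Walk.mem_support_append_iff]
    rcases hw with rfl | hw
    · exact .inr p.start_mem_support
    · exact .inr (hp w hw)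

theorem exists_walk_length_eq_tourLength (hG : G.Preconnected) (hA : A.Finite) (u v : V) :
    ∃ p : G.Walk u v, (∀ w ∈ A, w ∈ p.support) ∧ p.length = tourLength G A u v :=
  have ⟨p, hp⟩ := exists_walk_visiting_of_finite hG hA u v
  Nat.sInf_mem (s := {n | ∃ p : G.Walk u v, (∀ w ∈ A, w ∈ p.support) ∧ p.length = n})
    ⟨_, p, hp, rfl⟩

theorem tourLength_le_tourLength_of_subset_insert (hG : G.Preconnected) (hB : B.Finite)
    (h : A ⊆ insert u B) (v : V) : tourLength G A u v ≤ tourLength G B u v := by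
  obtain ⟨p, hp, hlen⟩ := exists_walk_length_eq_tourLength hG hB u v
  rw [← hlen]
  refine tourLength_le_length p fun w hw => ?_
  rcases h hw with rfl | hwB
  · exact p.start_mem_support
  · exact hp w hwB

theorem tourLength_le_add_one_of_adj (hG : G.Preconnected) (hA : A.Finite) (huv : G.Adj u v)
    (x : V) : tourLength G A u x ≤ tourLength G A v x + 1 := by
  obtain ⟨p, hp, hlen⟩ := exists_walk_length_eq_tourLength hG hA v x
  rw [← hlen, ← Walk.length_cons huv]
  exact tourLength_le_length _ fun w hw => List.mem_cons_of_mem _ (hp w hw)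

theorem tourLength_image_iso (f : G ≃g H) (A : Set V) (u v : V) :
    tourLength H (f '' A) (f u) (f v) = tourLength G A u v := by
  unfold tourLength
  congr 1
  ext n
  constructor
  · rintro ⟨p, hp, rfl⟩
    refine ⟨(p.map f.symm.toHom).copy (f.symm_apply_apply u) (f.symm_apply_apply v),
      fun w hw => ?_, by simp⟩
    rw [Walk.support_copy, Walk.support_map]
    exact List.mem_map.2 ⟨f w, hp _ ⟨w, hw, rfl⟩, f.symm_apply_apply w⟩
  · rintro ⟨p, hp, rfl⟩
    refine ⟨p.map f.toHom, ?_, Walk.length_map _ _⟩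
    rintro _ ⟨w, hw, rfl⟩
    rw [Walk.support_map]
    exact List.mem_map_of_mem (hp w hw)

/-- The edge `ab` leads from `C` to its complement and is the only edge of `G` that does. -/
structure IsCutEdge (G : SimpleGraph V) (C : Set V) (a b : V) : Prop where
  adj : G.Adj a b
  mem : a ∈ C
  notMem : b ∉ C
  eq_of_adj : ∀ ⦃y z⦄, G.Adj y z → y ∈ C → z ∉ C → y = a ∧ z = b

namespace IsCutEdge

protected theorem compl (h : IsCutEdge G C a b) : IsCutEdge G Cᶜ b a where
  adj := h.adj.symm
  mem := h.notMem
  notMem := Set.notMem_compl_iff.2 h.mem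
  eq_of_adj _ _ hyz hy hz := (h.eq_of_adj hyz.symm (Set.notMem_compl_iff.1 hz) hy).symm

theorem exists_walk_eq_append_cons (h : IsCutEdge G C a b) (p : G.Walk u x) (hu : u ∈ C)
    (hw : w ∈ p.support) (hwC : w ∉ C) :
    ∃ (p₁ : G.Walk u a) (p₂ : G.Walk b x),
      p = p₁.append (.cons h.adj p₂) ∧ ∀ y ∈ p₁.support, y ∈ C := by
  induction p with
  | nil =>
    obtain rfl := Walk.mem_support_nil_iff.1 hw
    exact absurd hu hwC
  | @cons u z x huz p ih =>
    by_cases hz : z ∈ C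
    · have hwp : w ∈ p.support := by
        rcases List.mem_cons.1 hw with rfl | hwp
        exacts [absurd hu hwC, hwp]
      obtain ⟨p₁, p₂, rfl, hp₁⟩ := ih hz hwp
      exact ⟨.cons huz p₁, p₂, rfl, List.forall_mem_cons.2 ⟨hu, hp₁⟩⟩
    · obtain ⟨rfl, rfl⟩ := h.eq_of_adj huz hu hz
      exact ⟨.nil, p, rfl, by simpa using hu⟩

/- An optimal tour from `b` crosses to `a` and back: it reads `b ⇝ b → a ⇝ a → b ⇝ x`. Performing
its second stretch before its first one gives the tour `a ⇝ a → b ⇝ b ⇝ x`, shorter by one. -/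
theorem tourLength_add_one_eq (h : IsCutEdge G C a b) (hG : G.Preconnected) (hA : A.Finite)
    (hx : x ∉ C) (hAC : (A ∩ C).Nonempty) :
    tourLength G A a x + 1 = tourLength G A b x := by
  refine le_antisymm ?_ (tourLength_le_add_one_of_adj hG hA h.adj.symm x)
  obtain ⟨w, hwA, hwC⟩ := hAC
  obtain ⟨p, hp, hlen⟩ := exists_walk_length_eq_tourLength hG hA b x
  obtain ⟨p₁, p₂, rfl, -⟩ := h.compl.exists_walk_eq_append_cons p h.notMem (hp w hwA)
    (Set.notMem_compl_iff.2 hwC)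
  obtain ⟨p₃, p₄, rfl, -⟩ := h.exists_walk_eq_append_cons p₂ h.mem p₂.end_mem_support hx
  have hle : tourLength G A a x ≤ (p₃.append (.cons h.adj (p₁.append p₄))).length := by
    refine tourLength_le_length _ fun w hw => ?_
    have hb := p₁.start_mem_support
    grind [Walk.mem_support_append_iff, Walk.support_cons]
  simp only [Walk.length_append, Walk.length_cons] at hlen hle
  omega

theorem tourLength_eq_add_one (h : IsCutEdge G C a b) (hG : G.Preconnected) (hA : A.Finite)
    (hx : x ∉ C) (hAC : Disjoint A C) :
    tourLength G A a x = tourLength G A b x + 1 := by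
  refine le_antisymm (tourLength_le_add_one_of_adj hG hA h.adj x) ?_
  obtain ⟨p, hp, hlen⟩ := exists_walk_length_eq_tourLength hG hA a x
  obtain ⟨p₁, p₂, rfl, hp₁⟩ := h.exists_walk_eq_append_cons p h.mem p.end_mem_support hx
  have hle : tourLength G A b x ≤ p₂.length := by
    refine tourLength_le_length _ fun w hw => ?_
    have hwp₁ : w ∉ p₁.support := fun hw₁ => Set.disjoint_left.1 hAC hw (hp₁ w hw₁)
    rcases Walk.mem_support_append_iff _ _ |>.1 (hp w hw) with hw₁ | hw₂
    · exact absurd hw₁ hwp₁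
    rcases List.mem_cons.1 hw₂ with rfl | hw₂
    exacts [absurd p₁.end_mem_support hwp₁, hw₂]
  simp only [Walk.length_append, Walk.length_cons] at hlen
  omega

end IsCutEdge

/-- Left translation by `g` as an automorphism of a Cayley graph, used to move the starting point
of a tour. -/
def mulCayleyMulLeft {M : Type*} [Group M] (s : Set M) (g : M) : mulCayley s ≃g mulCayley s where
  toEquiv := Equiv.mulLeft g
  map_rel_iff' := mulCayley_adj_mul_iff_right

theorem tourLength_mulCayley_mul_left {M : Type*} [Group M] (s : Set M) (g : M) (A : Set M)
    (u v : M) :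
    tourLength (mulCayley s) ((g * ·) '' A) (g * u) (g * v) = tourLength (mulCayley s) A u v :=
  tourLength_image_iso (mulCayleyMulLeft s g) A u v

end Tours

section Tree

variable {q : ℕ}

theorem gen_mul_self (i : Fin q) : gen q i * gen q i = 1 := by
  rw [gen, ← map_mul, ← ofAdd_add, CharTwo.add_self_eq_zero, ofAdd_zero, map_one]

theorem gen_mul_gen_mul (i : Fin q) (x : Gamma q) : gen q i * (gen q i * x) = x := by
  rw [← mul_assoc, gen_mul_self, one_mul]

theorem inv_gen (i : Fin q) : (gen q i)⁻¹ = gen q i :=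
  inv_eq_of_mul_eq_one_left (gen_mul_self i)

theorem exists_prod_map_gen_eq (x : Gamma q) : ∃ l : List (Fin q), (l.map (gen q)).prod = x := by
  induction x using Monoid.CoprodI.induction_on with
  | one => exact ⟨[], rfl⟩
  | of i m =>
    obtain rfl | rfl : m = 1 ∨ m = Multiplicative.ofAdd 1 := by revert m; decide
    · exact ⟨[], (map_one _).symm⟩
    · exact ⟨[i], List.prod_singleton⟩
  | mul x y hx hy =>
    obtain ⟨l, rfl⟩ := hx
    obtain ⟨l', rfl⟩ := hy
    exact ⟨l ++ l', by rw [List.map_append, List.prod_append]⟩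

theorem isChain_ne_cons {α : Type*} {a : α} {l : List α} (hl : l.IsChain (· ≠ ·))
    (ha : l.head? ≠ some a) : (a :: l).IsChain (· ≠ ·) :=
  List.isChain_cons.2 ⟨fun _ hb hab => ha (hab ▸ hb), hl⟩

theorem exists_isChain_ne_prod_map_gen_eq (w : List (Fin q)) :
    ∃ l : List (Fin q), l.IsChain (· ≠ ·) ∧ (l.map (gen q)).prod = (w.map (gen q)).prod ∧
      l.length ≤ w.length := by
  induction w with
  | nil => exact ⟨[], .nil, rfl, le_rfl⟩
  | cons j w ih =>
    obtain ⟨l, hl, hprod, hlen⟩ := ih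
    by_cases hj : l.head? = some j
    · obtain ⟨t, rfl⟩ := List.head?_eq_some_iff.1 hj
      refine ⟨t, hl.tail, ?_, ?_⟩
      · simp only [List.map_cons, List.prod_cons] at hprod ⊢
        rw [← hprod, gen_mul_gen_mul]
      · simp only [List.length_cons] at hlen ⊢
        omega
    · refine ⟨j :: l, isChain_ne_cons hl hj, ?_, Nat.succ_le_succ hlen⟩
      rw [List.map_cons, List.prod_cons, hprod, List.map_cons, List.prod_cons]

/-- A list of indices without equal neighbours, as a reduced word of the free product `Γ`. This
transfers the uniqueness of reduced words to such lists. -/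
def reducedWord (l : List (Fin q)) (hl : l.IsChain (· ≠ ·)) :
    Monoid.CoprodI.Word (fun _ : Fin q => Multiplicative (ZMod 2)) where
  toList := l.map fun i => ⟨i, Multiplicative.ofAdd 1⟩
  ne_one := by
    rintro _ hp
    obtain ⟨i, _, rfl⟩ := List.mem_map.1 hp
    exact show Multiplicative.ofAdd (1 : ZMod 2) ≠ 1 by decide
  chain_ne := (List.isChain_map _).2 hl

theorem prod_reducedWord (l : List (Fin q)) (hl : l.IsChain (· ≠ ·)) :
    (reducedWord l hl).prod = (l.map (gen q)).prod := by
  rw [Monoid.CoprodI.Word.prod, reducedWord, List.map_map]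
  rfl

theorem prod_map_gen_injOn :
    Set.InjOn (fun l : List (Fin q) => (l.map (gen q)).prod) {l | l.IsChain (· ≠ ·)} := by
  intro l hl l' hl' h
  have hword : reducedWord l hl = reducedWord l' hl' := by
    apply Monoid.CoprodI.Word.equiv.symm.injective
    change (reducedWord l hl).prod = (reducedWord l' hl').prod
    rwa [prod_reducedWord, prod_reducedWord]
  simpa [reducedWord, Function.comp_def] using congrArg (fun w => w.toList.map Sigma.fst) hword

theorem wlen_prod_map_gen {l : List (Fin q)} (hl : l.IsChain (· ≠ ·)) :
    wlen (l.map (gen q)).prod = l.length := by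
  refine le_antisymm (Nat.sInf_le ⟨l, rfl, rfl⟩) (le_csInf ⟨_, l, rfl, rfl⟩ ?_)
  rintro _ ⟨w, rfl, hw⟩
  obtain ⟨l', hl', hprod, hlen⟩ := exists_isChain_ne_prod_map_gen_eq w
  rwa [prod_map_gen_injOn hl' hl (hprod.trans hw)] at hlen

theorem wlen_gen (i : Fin q) : wlen (gen q i) = 1 := by
  simpa using wlen_prod_map_gen (List.isChain_singleton i)

theorem prod_map_gen_mem_cone_gen_iff {l : List (Fin q)} (hl : l.IsChain (· ≠ ·)) {i : Fin q} :
    (l.map (gen q)).prod ∈ cone (gen q i) ↔ l.head? = some i := by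
  change wlen (gen q i) + wlen ((gen q i)⁻¹ * _) = wlen _ ↔ _
  rw [wlen_gen, inv_gen, wlen_prod_map_gen hl]
  by_cases hi : l.head? = some i
  · obtain ⟨t, rfl⟩ := List.head?_eq_some_iff.1 hi
    rw [List.map_cons, List.prod_cons, gen_mul_gen_mul, wlen_prod_map_gen (l := t) hl.tail]
    simp [add_comm]
  · rw [← List.prod_cons, ← List.map_cons, wlen_prod_map_gen (isChain_ne_cons hl hi),
      List.length_cons]
    simp only [hi, iff_false]
    omega

theorem one_notMem_cone_gen (i : Fin q) : 1 ∉ cone (gen q i) :=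
  (prod_map_gen_mem_cone_gen_iff (l := []) .nil).not.2 (by simp)

theorem gen_mem_cone_gen (i : Fin q) : gen q i ∈ cone (gen q i) := by
  simpa using prod_map_gen_mem_cone_gen_iff (i := i) (List.isChain_singleton i)

theorem gen_ne_one (i : Fin q) : gen q i ≠ 1 :=
  fun h => one_notMem_cone_gen i (h ▸ gen_mem_cone_gen i)

/- Appending or cancelling a last letter does not change the first letter of a reduced word, unless
the word has only that one letter. -/
theorem eq_gen_of_mul_gen_notMem_cone_gen {i j : Fin q} {x : Gamma q} (hx : x ∈ cone (gen q i))
    (hxj : x * gen q j ∉ cone (gen q i)) : x = gen q i ∧ j = i := by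
  obtain ⟨w, rfl⟩ := exists_prod_map_gen_eq x
  obtain ⟨l, hl, hlw, -⟩ := exists_isChain_ne_prod_map_gen_eq w
  rw [← hlw] at hx hxj ⊢
  obtain ⟨t, rfl⟩ := List.head?_eq_some_iff.1 ((prod_map_gen_mem_cone_gen_iff hl).1 hx)
  have hlast : j ∈ (i :: t).getLast? := by
    by_contra hlast
    have happend : (i :: t ++ [j]).IsChain (· ≠ ·) := by
      refine List.isChain_append.2 ⟨hl, List.isChain_singleton j, ?_⟩
      rintro k hk _ ⟨⟩ rfl
      exact hlast hk
    exact hxj (by simpa [mul_assoc] using (prod_map_gen_mem_cone_gen_iff happend).2 rfl)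
  rcases List.eq_nil_or_concat t with rfl | ⟨t, k, rfl⟩
  · obtain rfl : i = j := by simpa using hlast
    exact ⟨by simp, rfl⟩
  · obtain rfl : k = j := by simpa [List.getLast?_cons] using hlast
    have hinit : (i :: t).IsChain (· ≠ ·) := by
      rw [List.concat_eq_append, ← List.cons_append] at hl
      exact (List.isChain_append.1 hl).1
    have hcancel : gen q i * ((t.concat k).map (gen q)).prod * gen q k =
        ((i :: t).map (gen q)).prod := by
      simp [mul_assoc, gen_mul_self]
    exact absurd ((prod_map_gen_mem_cone_gen_iff hinit).2 rfl) (hcancel ▸ hxj)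

/-- The homogeneous tree `T_q`, as the Cayley graph of `Γ` with respect to `S`. -/
abbrev tree (q : ℕ) : SimpleGraph (Gamma q) :=
  SimpleGraph.mulCayley (Set.range (gen q))

theorem tree_adj_iff {x y : Gamma q} : (tree q).Adj x y ↔ ∃ i, x * gen q i = y := by
  simp only [SimpleGraph.mulCayley_adj', Set.exists_range_iff]
  constructor
  · rintro ⟨-, i, rfl | rfl⟩
    exacts [⟨i, rfl⟩, ⟨i, by rw [mul_assoc, gen_mul_self, mul_one]⟩]
  · rintro ⟨i, rfl⟩
    exact ⟨fun h => gen_ne_one i (left_eq_mul.1 h), i, .inl rfl⟩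

theorem tree_preconnected : (tree q).Preconnected := by
  intro x y
  obtain ⟨l, hl⟩ := exists_prod_map_gen_eq (x⁻¹ * y)
  rw [eq_inv_mul_iff_mul_eq] at hl
  subst hl
  induction l generalizing x with
  | nil => simp
  | cons i l ih =>
    rw [List.map_cons, List.prod_cons, ← mul_assoc]
    exact (tree_adj_iff.2 ⟨i, rfl⟩).reachable.trans (ih _)

theorem isCutEdge_tree_cone_gen (i : Fin q) : IsCutEdge (tree q) (cone (gen q i)) (gen q i) 1 where
  adj := tree_adj_iff.2 ⟨i, gen_mul_self i⟩
  mem := gen_mem_cone_gen i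
  notMem := one_notMem_cone_gen i
  eq_of_adj y z hyz hy hz := by
    obtain ⟨j, rfl⟩ := tree_adj_iff.1 hyz
    obtain ⟨rfl, rfl⟩ := eq_gen_of_mul_gen_notMem_cone_gen hy hz
    exact ⟨rfl, gen_mul_self j⟩

end Tree

section WordLength

variable {q : ℕ} {η : Config q} {s x : Gamma q} {n : ℕ}

theorem translate_one (η : Config q) : translate 1 η = η := by
  simp only [translate, one_mul]
  exact Finsupp.mapDomain_id

theorem translate_translate (g h : Gamma q) (η : Config q) :
    translate g (translate h η) = translate (g * h) η := by
  simp only [translate, ← Finsupp.mapDomain_comp, Function.comp_def, mul_assoc]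

theorem coe_support_translate (g : Gamma q) (η : Config q) :
    ((translate g η).support : Set (Gamma q)) = (g * ·) '' η.support := by
  classical
  rw [translate, Finsupp.mapDomain_support_of_injective (mul_right_injective g), Finset.coe_image]

theorem card_support_translate (g : Gamma q) (η : Config q) :
    (translate g η).support.card = η.support.card := by
  classical
  rw [translate, Finsupp.mapDomain_support_of_injective (mul_right_injective g),
    Finset.card_image_of_injective _ (mul_right_injective g)]

theorem lmul_move (i : Fin q) (η : Config q) (x : Gamma q) :
    lmul (move q i) (η, x) = (translate (gen q i) η, gen q i * x) := by
  simp [lmul, move]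

theorem lmul_lampSwitch (η : Config q) (x : Gamma q) :
    lmul (lampSwitch q) (η, x) = (Finsupp.single 1 1 + η, x) := by
  simp [lmul, lampSwitch, translate_one]

/-- The cost of preparing `z = (η, x)` by walking on the tree from `o` to `x` and switching each
lamp of `η` on the way; this turns out to be `ℓ(z)`. -/
noncomputable def tourCost (z : L q) : ℕ :=
  tourLength (tree q) z.1.support 1 z.2 + z.1.support.card

theorem tourCost_lmul_move (i : Fin q) (η : Config q) (x : Gamma q) :
    tourCost (lmul (move q i) (η, x)) =
      tourLength (tree q) η.support (gen q i) x + η.support.card := by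
  rw [lmul_move, ← tourLength_mulCayley_mul_left _ (gen q i)]
  simp only [tourCost, coe_support_translate, card_support_translate, gen_mul_self]

theorem tourCost_lmul_le {g : L q} (hg : g ∈ lampGen q) (z : L q) :
    tourCost (lmul g z) ≤ tourCost z + 1 := by
  classical
  obtain ⟨η, x⟩ := z
  rcases hg with rfl | ⟨i, rfl⟩
  · have hsupp : (Finsupp.single 1 1 + η).support ⊆ insert 1 η.support :=
      Finsupp.support_add.trans (Finset.union_subset_union_left Finsupp.support_single_subset)
    have htour := tourLength_le_tourLength_of_subset_insert tree_preconnected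
      η.support.finite_toSet (by simpa using Finset.coe_subset.2 hsupp) x
    have hcard := (Finset.card_le_card hsupp).trans (Finset.card_insert_le _ _)
    rw [lmul_lampSwitch]
    simp only [tourCost]
    omega
  · have htour := tourLength_le_add_one_of_adj tree_preconnected η.support.finite_toSet
      (isCutEdge_tree_cone_gen i).adj x
    rw [tourCost_lmul_move]
    simp only [tourCost]
    omega

theorem tourCost_lone : tourCost (lone q) = 0 := by
  simpa [tourCost, lone] using tourLength_le_length (G := tree q) (A := ∅) (.nil (u := 1)) (by simp)

theorem tourCost_foldr_lmul_le_length (w : List (L q)) (hw : ∀ g ∈ w, g ∈ lampGen q) :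
    tourCost (w.foldr lmul (lone q)) ≤ w.length := by
  induction w with
  | nil => exact tourCost_lone.le
  | cons g w ih =>
    obtain ⟨hg, hw⟩ := List.forall_mem_cons.1 hw
    exact (tourCost_lmul_le hg _).trans (Nat.succ_le_succ (ih hw))

/-- The lengths of the words over `S_{L_q}` that represent `z`; `ℓ(z)` is their infimum. -/
def wordLengths (z : L q) : Set ℕ :=
  {n | ∃ w : List (L q), w.length = n ∧ (∀ g ∈ w, g ∈ lampGen q) ∧ w.foldr lmul (lone q) = z}

theorem zero_mem_wordLengths_lone : 0 ∈ wordLengths (lone q) :=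
  ⟨[], rfl, by simp, rfl⟩

theorem succ_mem_wordLengths_lmul {g z : L q} (hg : g ∈ lampGen q) (hn : n ∈ wordLengths z) :
    n + 1 ∈ wordLengths (lmul g z) := by
  obtain ⟨w, rfl, hw, rfl⟩ := hn
  exact ⟨g :: w, rfl, List.forall_mem_cons.2 ⟨hg, hw⟩, rfl⟩

theorem add_card_support_mem_wordLengths_of_erase
    (h : n + (η.erase s).support.card ∈ wordLengths (translate s⁻¹ (η.erase s), x)) :
    n + η.support.card ∈ wordLengths (translate s⁻¹ η, x) := by
  classical
  by_cases hs : s ∈ η.support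
  · have hηs : η s = 1 := Fin.eq_one_of_ne_zero _ (Finsupp.mem_support_iff.1 hs)
    have hη : lmul (lampSwitch q) (translate s⁻¹ (η.erase s), x) = (translate s⁻¹ η, x) := by
      rw [lmul_lampSwitch]
      conv_rhs => rw [← Finsupp.single_add_erase s η, hηs]
      simp [translate, Finsupp.mapDomain_add]
    rw [← hη, ← Finset.card_erase_add_one hs, ← Finsupp.support_erase, ← add_assoc]
    exact succ_mem_wordLengths_lmul (.inl rfl) h
  · rwa [Finsupp.erase_of_notMem_support hs] at h

theorem length_add_card_support_mem_wordLengths (p : (tree q).Walk s x)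
    (hp : ∀ w ∈ η.support, w ∈ p.support) :
    p.length + η.support.card ∈ wordLengths (translate s⁻¹ η, s⁻¹ * x) := by
  classical
  induction p generalizing η with
  | @nil s =>
    apply add_card_support_mem_wordLengths_of_erase
    have hη : η.erase s = 0 := by
      rw [← Finsupp.support_eq_empty, Finsupp.support_erase, Finset.eq_empty_iff_forall_notMem]
      intro w hw
      rw [Finset.mem_erase] at hw
      exact hw.1 (SimpleGraph.Walk.mem_support_nil_iff.1 (hp w hw.2))
    simpa [hη, translate, lone] using zero_mem_wordLengths_lone
  | @cons s y x hsy p ih =>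
    apply add_card_support_mem_wordLengths_of_erase
    obtain ⟨i, rfl⟩ := tree_adj_iff.1 hsy
    have htail : ∀ w ∈ (η.erase s).support, w ∈ p.support := by
      intro w hw
      rw [Finsupp.support_erase, Finset.mem_erase] at hw
      exact (List.mem_cons.1 (hp w hw.2)).resolve_left hw.1
    have hword := succ_mem_wordLengths_lmul (.inr ⟨i, rfl⟩) (ih htail)
    rw [lmul_move, translate_translate, mul_inv_rev, inv_gen, mul_assoc, gen_mul_gen_mul,
      gen_mul_gen_mul] at hword
    rwa [SimpleGraph.Walk.length_cons, add_right_comm]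

theorem tourCost_mem_wordLengths (z : L q) : tourCost z ∈ wordLengths z := by
  obtain ⟨p, hp, hlen⟩ := exists_walk_length_eq_tourLength tree_preconnected
    z.1.support.finite_toSet 1 z.2
  have hword := length_add_card_support_mem_wordLengths p hp
  rwa [hlen, inv_one, translate_one, one_mul] at hword

theorem llen_eq_tourCost (z : L q) : llen z = tourCost z := by
  refine le_antisymm (Nat.sInf_le (tourCost_mem_wordLengths z))
    (le_csInf ⟨_, tourCost_mem_wordLengths z⟩ ?_)
  rintro _ ⟨w, rfl, hw, rfl⟩
  exact tourCost_foldr_lmul_le_length w hw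

end WordLength

theorem llen_diff_move_of_not_mem_cone_general {q : ℕ} (i : Fin q) (η : Config q)
    (x : Gamma q) (hx : x ∉ cone (gen q i)) :
    ((∃ w ∈ cone (gen q i), η w ≠ 0) →
      (llen (lmul (move q i) (η, x)) : ℤ) - (llen ((η, x) : L q) : ℤ) = -1) ∧
    ((∀ w ∈ cone (gen q i), η w = 0) →
      (llen (lmul (move q i) (η, x)) : ℤ) - (llen ((η, x) : L q) : ℤ) = 1) := by
  have hcut := isCutEdge_tree_cone_gen i
  have hfin := η.support.finite_toSet
  rw [llen_eq_tourCost, llen_eq_tourCost, tourCost_lmul_move]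
  simp only [tourCost]
  constructor
  · rintro ⟨w, hw, hηw⟩
    have := hcut.tourLength_add_one_eq tree_preconnected hfin hx
      ⟨w, Finsupp.mem_support_iff.2 hηw, hw⟩
    omega
  · intro hη
    have := hcut.tourLength_eq_add_one tree_preconnected hfin hx
      (Set.disjoint_left.2 fun w hwη hw => Finsupp.mem_support_iff.1 hwη (hη w hw))
    omega

/-- for `a ∈ S`, `x ∈ C̄_a` and a finitely supported configuration `η`,
`ℓ((𝟘,a)(η,x)) − ℓ((η,x)) = −1` if `η_a ≢ 𝟘` and `= 1` if `η_a ≡ 𝟘`. -/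
theorem llen_diff_move_of_not_mem_cone {q : ℕ} (hq : 3 ≤ q) (i : Fin q)
    (η : Config q) (x : Gamma q) (hx : x ∉ cone (gen q i)) :
    ((∃ w ∈ cone (gen q i), η w ≠ 0) →
      (llen (lmul (move q i) (η, x)) : ℤ) - (llen ((η, x) : L q) : ℤ) = -1) ∧
    ((∀ w ∈ cone (gen q i), η w = 0) →
      (llen (lmul (move q i) (η, x)) : ℤ) - (llen ((η, x) : L q) : ℤ) = 1) :=
  llen_diff_move_of_not_mem_cone_general i η x hx

end LamplighterTree
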